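/- arXiv:0904.1296 — 4 statements merged into one kernel-verified Lean document; each statement's English description precedes it below -/
import Mathlib

section
/- Let G be a bridgeless cubic graph, M a perfect matching of G, and {A, B, C, D} a nice family of four pairwise disjoint M-balanced matchings. Then τ(G) ≤ 5. -/
/-!
Write `F = G − M`, a spanning `2`-regular graph, and let `P i` (`i : Fin 4`) be perfect matchings
with `M ∩ P i` equal to `A, B, C, D` respectively. The covering consists of `M` and of four
modifications `N i` of the `P i`; only edges of `F` have to be covered by the latter.

On an even cycle `K` of `F` two of the four families, with indices `s ≠ t`, miss `K`. So `P s`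
and `P t` restrict to perfect matchings of `K`, and `N t` is obtained by replacing `P t` on `K` with
the complement of `P s` in `K`, which is a perfect matching of `K` as `K` is `2`-regular
(`existsUnique_compl`). Then `N s` and `N t` cover `K`.

On an odd cycle nothing is changed. Each `P i` leaves `F` in exactly one vertex `x` of the cycle, so
going round from `x` the edges of the cycle alternate, starting with an edge outside `P i`
(`adj_iff_odd`). Hence an edge avoided by all four `P i` lies at an even distance after each of the
four special vertices, which makes three of the four paths between them even, contrary to the
assumption that at least two are odd.
-/

open SimpleGraph

/-- A `k`-covering of `G` by perfect matchings. -/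
def IsPMCovering {V : Type*} (G : SimpleGraph V) {k : ℕ}
    (M : Fin k → G.Subgraph) : Prop :=
  (∀ i, (M i).IsPerfectMatching) ∧ ∀ e ∈ G.edgeSet, ∃ i, e ∈ (M i).edgeSet

/-- The perfect matching index of `G`. -/
noncomputable def tau {V : Type*} (G : SimpleGraph V) : ℕ :=
  sInf {k | ∃ M : Fin k → G.Subgraph, IsPMCovering G M}

/-- `f : ZMod n → V` is a cyclic parametrization of the connected component `K`
of `F`. -/
def IsCycleOn {V : Type*} (F : SimpleGraph V) (K : F.ConnectedComponent)
    (n : ℕ) (f : ZMod n → V) : Prop :=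
  Function.Injective f ∧ (∀ i, F.Adj (f i) (f (i + 1))) ∧
    ∀ v : V, F.connectedComponentMk v = K ↔ ∃ i, f i = v

/-- `A` is an `M`-balanced matching: `A = M ∩ M'` for some perfect matching `M'`. -/
def IsBalancedMatching {V : Type*} (G : SimpleGraph V) (M : G.Subgraph)
    (A : Set (Sym2 V)) : Prop :=
  ∃ M' : G.Subgraph, M'.IsPerfectMatching ∧ A = M.edgeSet ∩ M'.edgeSet

/-- `{A, B, C, D}` is a nice family for the perfect matching `M` of `G`:
(i) every odd cycle of the `2`-factor `G − M` has exactly one vertex incident with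
an edge of each of `A`, `B`, `C`, `D`, and at least two of the (pairwise
edge-disjoint) paths these four vertices determine on the cycle are odd;
(ii) every even cycle of `G − M` is incident to edges of at most two of
`A`, `B`, `C`, `D`. -/
def IsNiceFamily {V : Type*} (G : SimpleGraph V) (M : G.Subgraph)
    (A B C D : Set (Sym2 V)) : Prop :=
  (∀ K : (G.deleteEdges M.edgeSet).ConnectedComponent, Odd (Nat.card K.supp) →
    ∃ (n : ℕ) (f : ZMod n → V), IsCycleOn (G.deleteEdges M.edgeSet) K n f ∧
      ∃ p q r : ℕ, 0 < p ∧ 0 < q ∧ 0 < r ∧ p + q + r < n ∧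
      2 ≤ ([p, q, r, n - p - q - r].countP (fun x => x % 2 = 1)) ∧
      ∃ va vb vc vd : V,
        (∀ v : V, (G.deleteEdges M.edgeSet).connectedComponentMk v = K →
          (((∃ e ∈ A, v ∈ e) ↔ v = va) ∧ ((∃ e ∈ B, v ∈ e) ↔ v = vb) ∧
            ((∃ e ∈ C, v ∈ e) ↔ v = vc) ∧ ((∃ e ∈ D, v ∈ e) ↔ v = vd))) ∧
        ({va, vb, vc, vd} : Set V) =
          {f 0, f (p : ZMod n), f ((p + q : ℕ) : ZMod n),
            f ((p + q + r : ℕ) : ZMod n)}) ∧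
  (∀ K : (G.deleteEdges M.edgeSet).ConnectedComponent, Even (Nat.card K.supp) →
    ∃ S T, S ∈ ({A, B, C, D} : Set (Set (Sym2 V))) ∧
      T ∈ ({A, B, C, D} : Set (Set (Sym2 V))) ∧ S ≠ T ∧
      (∀ e ∈ S, ∀ v ∈ e, (G.deleteEdges M.edgeSet).connectedComponentMk v ≠ K) ∧
      (∀ e ∈ T, ∀ v ∈ e, (G.deleteEdges M.edgeSet).connectedComponentMk v ≠ K))

section

variable {V : Type*}

lemma adj_deleteEdges_iff {G : SimpleGraph V} {M : G.Subgraph} {v w : V} :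
    (G.deleteEdges M.edgeSet).Adj v w ↔ G.Adj v w ∧ ¬ M.Adj v w := by
  rw [deleteEdges_adj, Subgraph.mem_edgeSet]

/-- The complement of a perfect matching in a cubic graph is `2`-regular. -/
lemma exists_two_neighbors [Fintype V] {G : SimpleGraph V} [DecidableRel G.Adj]
    (hG : G.IsRegularOfDegree 3) {M : G.Subgraph} (hM : M.IsPerfectMatching) (v : V) :
    ∃ a b, a ≠ b ∧ ∀ w, (G.deleteEdges M.edgeSet).Adj v w ↔ w = a ∨ w = b := by
  classical
  obtain ⟨m, hm, hu⟩ := Subgraph.isPerfectMatching_iff.1 hM v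
  have hMv : ∀ w, M.Adj v w ↔ w = m := fun w => ⟨hu w, fun h => h ▸ hm⟩
  have hcard : (G.neighborFinset v).card = 3 := hG v
  obtain ⟨x, y, z, hxy, hxz, hyz, hs⟩ := Finset.card_eq_three.1 hcard
  have hadj : ∀ w, G.Adj v w ↔ w = x ∨ w = y ∨ w = z := fun w => by
    rw [← mem_neighborFinset, hs]; simp
  simp only [adj_deleteEdges_iff, hMv, hadj]
  rcases (hadj m).1 (M.adj_sub hm) with rfl | rfl | rfl
  · exact ⟨y, z, hyz, by grind⟩
  · exact ⟨x, z, hxz, by grind⟩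
  · exact ⟨x, y, hxy, by grind⟩

/-- At a vertex where the perfect matching `P` uses an edge of `F = G − M`, exactly one edge of `F`
is not in `P`. -/
lemma existsUnique_compl [Fintype V] {G : SimpleGraph V} [DecidableRel G.Adj]
    (hG : G.IsRegularOfDegree 3) {M P : G.Subgraph} (hM : M.IsPerfectMatching)
    (hP : P.IsPerfectMatching) {v : V} (hv : ∀ w, P.Adj v w → ¬ M.Adj v w) :
    ∃! u, (G.deleteEdges M.edgeSet).Adj v u ∧ ¬ P.Adj v u := by
  obtain ⟨a, b, hab, hF⟩ := exists_two_neighbors hG hM v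
  obtain ⟨w, hw, hu⟩ := Subgraph.isPerfectMatching_iff.1 hP v
  have hPv : ∀ u, P.Adj v u ↔ u = w := fun u => ⟨hu u, fun h => h ▸ hw⟩
  have hwab := (hF w).1 (adj_deleteEdges_iff.2 ⟨P.adj_sub hw, hv w hw⟩)
  simp only [hF, hPv]
  rcases hwab with rfl | rfl
  · exact ⟨b, by grind, by grind⟩
  · exact ⟨a, by grind, by grind⟩

/-- If `f x` is the only vertex of the cycle `f` of `G − M` at which the perfect matching `P` uses
an edge of `M`, then `P` contains precisely every other edge of the cycle, counted from `f x`. -/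
lemma adj_iff_odd [Fintype V] {G : SimpleGraph V} [DecidableRel G.Adj]
    (hG : G.IsRegularOfDegree 3) {M P : G.Subgraph} (hM : M.IsPerfectMatching)
    (hP : P.IsPerfectMatching) {n : ℕ} (hn : 3 < n) {f : ZMod n → V}
    (hf : Function.Injective f)
    (hcyc : ∀ i, (G.deleteEdges M.edgeSet).Adj (f i) (f (i + 1))) {x : ZMod n}
    (hx : ∀ i, (∃ w, M.Adj (f i) w ∧ P.Adj (f i) w) ↔ i = x) (j : ℕ) (hj : j < n) :
    P.Adj (f (x + j)) (f (x + j + 1)) ↔ Odd j := by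
  have hPu := Subgraph.isPerfectMatching_iff.1 hP
  induction j with
  | zero =>
    obtain ⟨w, hMw, hPw⟩ := (hx x).2 rfl
    simp only [Nat.cast_zero, add_zero, Nat.not_odd_zero, iff_false]
    intro h
    have := (hPu (f x)).unique hPw h
    exact (adj_deleteEdges_iff.1 (hcyc x)).2 (this ▸ hMw)
  | succ j ih =>
    have ih : P.Adj (f (x + j)) (f (x + j + 1)) ↔ Odd j := ih (Nat.lt_of_succ_lt hj)
    push_cast
    rw [Nat.odd_add_one, ← ih, ← add_assoc]
    set y := x + (j : ZMod n) with hy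
    have hne : y + 1 ≠ x := by
      intro h
      have h0 : ((j + 1 : ℕ) : ZMod n) = 0 := by
        push_cast
        have : x + ((j : ZMod n) + 1) = x + 0 := by rw [← add_assoc, ← hy, h, add_zero]
        exact add_left_cancel this
      rw [ZMod.natCast_eq_zero_iff] at h0
      exact absurd (Nat.le_of_dvd (by omega) h0) (by omega)
    have hne2 : f y ≠ f (y + 1 + 1) := by
      intro h
      have h1 := hf h
      have h0 : ((2 : ℕ) : ZMod n) = 0 := by
        have : y + (1 + 1) = y + 0 := by rw [← add_assoc, ← h1, add_zero]
        push_cast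
        rw [← one_add_one_eq_two]
        exact add_left_cancel this
      rw [ZMod.natCast_eq_zero_iff] at h0
      exact absurd (Nat.le_of_dvd (by omega) h0) (by omega)
    obtain ⟨a, b, hab, hF⟩ := exists_two_neighbors hG hM (f (y + 1))
    have h1 := (hF (f y)).1 (hcyc y).symm
    have h2 := (hF _).1 (hcyc (y + 1))
    obtain ⟨w, hw, hu⟩ := hPu (f (y + 1))
    have hPv : ∀ u, P.Adj (f (y + 1)) u ↔ u = w := fun u => ⟨hu u, fun h => h ▸ hw⟩
    have hnM : ¬ M.Adj (f (y + 1)) w := fun h => hne ((hx _).1 ⟨w, h, hw⟩)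
    have h3 := (hF w).1 (adj_deleteEdges_iff.2 ⟨P.adj_sub hw, hnM⟩)
    rw [P.adj_comm (f y), hPv, hPv]
    grind

/-- The points `0, p, p + q, p + q + r` split the `n`-cycle into four paths, two of which at least
have odd length; going forward, every position `m` is at an odd distance from one of them. -/
lemma exists_odd_distance {n p q r m : ℕ} (hlt : p + q + r < n) (hm : m < n)
    (hc : 2 ≤ ([p, q, r, n - p - q - r].countP (fun x => x % 2 = 1))) :
    ∃ c ∈ [0, p, p + q, p + q + r], ∃ j < n, Odd j ∧ (c + j = m ∨ c + j = m + n) := by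
  by_contra! hcon
  have key : ∀ c ∈ [0, p, p + q, p + q + r], c < n →
      ∃ k, (c ≤ m ∧ m = c + 2 * k) ∨ (m < c ∧ m + n = c + 2 * k) := by
    intro c hc hcn
    rcases le_or_gt c m with h | h
    · have heven : ¬ Odd (m - c) := fun hodd =>
        (hcon c hc (m - c) (by omega) hodd).1 (by omega)
      obtain ⟨k, hk⟩ := Nat.not_odd_iff_even.1 heven
      exact ⟨k, Or.inl ⟨h, by omega⟩⟩
    · have heven : ¬ Odd (m + n - c) := fun hodd =>
        (hcon c hc (m + n - c) (by omega) hodd).2 (by omega)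
      obtain ⟨k, hk⟩ := Nat.not_odd_iff_even.1 heven
      exact ⟨k, Or.inr ⟨h, by omega⟩⟩
  obtain ⟨k0, h0⟩ := key 0 (by simp) (by omega)
  obtain ⟨k1, h1⟩ := key p (by simp) (by omega)
  obtain ⟨k2, h2⟩ := key (p + q) (by simp) (by omega)
  obtain ⟨k3, h3⟩ := key (p + q + r) (by simp) (by omega)
  clear key hcon
  -- A path not containing position `m` has even length, as a difference of two even distances.
  have three : (p % 2 = 0 ∧ q % 2 = 0 ∧ r % 2 = 0) ∨
      (p % 2 = 0 ∧ q % 2 = 0 ∧ (n - p - q - r) % 2 = 0) ∨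
      (p % 2 = 0 ∧ r % 2 = 0 ∧ (n - p - q - r) % 2 = 0) ∨
      (q % 2 = 0 ∧ r % 2 = 0 ∧ (n - p - q - r) % 2 = 0) := by
    have h0 : m = 2 * k0 := by omega
    rcases h1 with h1 | h1 <;> rcases h2 with h2 | h2 <;> rcases h3 with h3 | h3 <;>
      first
      | (exfalso; omega)
      | (left; omega)
      | (right; left; omega)
      | (right; right; left; omega)
      | (right; right; right; omega)
  simp only [List.countP_cons, List.countP_nil, decide_eq_true_eq] at hc
  rcases three with h | h | h | h <;> obtain ⟨e1, e2, e3⟩ := h <;>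
    simp only [e1, e2, e3, zero_ne_one, if_false] at hc <;> split_ifs at hc <;> omega

/-- A matching `P` with `M ∩ P = X` uses an edge of `M` at `v` iff `X` has an edge incident
with `v`. -/
lemma exists_mem_inter_iff {G : SimpleGraph V} {M P : G.Subgraph} {v : V} :
    (∃ e ∈ M.edgeSet ∩ P.edgeSet, v ∈ e) ↔ ∃ w, M.Adj v w ∧ P.Adj v w := by
  constructor
  · rintro ⟨e, ⟨hM, hP⟩, hv⟩
    obtain ⟨w, rfl⟩ := Sym2.mem_iff_exists.1 hv
    exact ⟨w, hM, hP⟩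
  · rintro ⟨w, hM, hP⟩
    exact ⟨s(v, w), ⟨hM, hP⟩, Sym2.mem_mk_left v w⟩

/-- On an odd cycle, the four unmodified perfect matchings of a nice family cover every edge. -/
lemma exists_adj_of_odd [Fintype V] {G : SimpleGraph V} [DecidableRel G.Adj]
    (hG : G.IsRegularOfDegree 3) {M : G.Subgraph} (hM : M.IsPerfectMatching)
    {P : Fin 4 → G.Subgraph} (hP : ∀ i, (P i).IsPerfectMatching) {n p q r : ℕ} {f : ZMod n → V}
    {K : (G.deleteEdges M.edgeSet).ConnectedComponent}
    (hf : IsCycleOn (G.deleteEdges M.edgeSet) K n f)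
    (hp : 0 < p) (hq : 0 < q) (hr : 0 < r) (hlt : p + q + r < n)
    (hc : 2 ≤ ([p, q, r, n - p - q - r].countP (fun x => x % 2 = 1))) {u : Fin 4 → V}
    (hu : ∀ i v, (G.deleteEdges M.edgeSet).connectedComponentMk v = K →
      ((∃ w, M.Adj v w ∧ (P i).Adj v w) ↔ v = u i))
    (hset : ∀ c ∈ [0, p, p + q, p + q + r], ∃ i, u i = f (c : ℕ))
    {v w : V} (hvw : (G.deleteEdges M.edgeSet).Adj v w)
    (hv : (G.deleteEdges M.edgeSet).connectedComponentMk v = K) :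
    ∃ i, (P i).Adj v w := by
  have : NeZero n := ⟨by omega⟩
  obtain ⟨hinj, hcyc, hK⟩ := hf
  have main : ∀ i : ZMod n, ∃ k, (P k).Adj (f i) (f (i + 1)) := by
    intro i
    obtain ⟨c, hcm, j, hj, hodd, hji⟩ := exists_odd_distance hlt (ZMod.val_lt i) hc
    obtain ⟨k, hk⟩ := hset c hcm
    have hi : (c : ZMod n) + (j : ZMod n) = i := by
      rw [← Nat.cast_add]
      rcases hji with h | h <;> rw [h] <;> simp
    refine ⟨k, ?_⟩
    rw [← hi]
    refine (adj_iff_odd hG hM (hP k) (by omega) hinj hcyc (fun i' => ?_) j hj).2 hodd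
    rw [hu k (f i') ((hK _).2 ⟨i', rfl⟩), hk, hinj.eq_iff]
  obtain ⟨i, rfl⟩ := (hK v).1 hv
  obtain ⟨i', rfl⟩ : ∃ i', f i' = w :=
    (hK w).1 (hv ▸ (ConnectedComponent.connectedComponentMk_eq_of_adj hvw).symm)
  by_cases h : i' = i + 1
  · exact h ▸ main i
  · obtain ⟨a, b, hab, hF⟩ := exists_two_neighbors hG hM (f i)
    have h1 := (hF _).1 (hcyc i)
    have h2 := (hF _).1 hvw
    have hprev := hcyc (i - 1)
    rw [sub_add_cancel] at hprev
    have h3 := (hF _).1 hprev.symm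
    have h4 : f i' ≠ f (i + 1) := fun e => h (hinj e)
    have h5 : f (i - 1) ≠ f (i + 1) := by
      intro e
      have e := hinj e
      have h0 : ((2 : ℕ) : ZMod n) = 0 := by
        push_cast
        linear_combination -e
      rw [ZMod.natCast_eq_zero_iff] at h0
      exact absurd (Nat.le_of_dvd (by omega) h0) (by omega)
    have h6 : f i' = f (i - 1) := by grind
    obtain ⟨k, hk⟩ := main (i - 1)
    rw [sub_add_cancel] at hk
    exact ⟨k, h6 ▸ hk.symm⟩

end

/-- If a bridgeless cubic graph `G` has a perfect matching `M` and a nice family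
`{A, B, C, D}` of pairwise disjoint `M`-balanced matchings, then `τ(G) ≤ 5`. -/
theorem tau_le_five_of_niceFamily {V : Type*} [Fintype V]
    (G : SimpleGraph V) [DecidableRel G.Adj] (hG : G.IsRegularOfDegree 3)
    (hbridgeless : ∀ e ∈ G.edgeSet, ¬ G.IsBridge e)
    (M : G.Subgraph) (hM : M.IsPerfectMatching)
    (A B C D : Set (Sym2 V))
    (hA : IsBalancedMatching G M A) (hB : IsBalancedMatching G M B)
    (hC : IsBalancedMatching G M C) (hD : IsBalancedMatching G M D)
    (hAB : Disjoint A B) (hAC : Disjoint A C) (hAD : Disjoint A D)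
    (hBC : Disjoint B C) (hBD : Disjoint B D) (hCD : Disjoint C D)
    (hfam : IsNiceFamily G M A B C D) :
    tau G ≤ 5 := by
  classical
  choose PA hPA hA' using hA
  choose PB hPB hB' using hB
  choose PC hPC hC' using hC
  choose PD hPD hD' using hD
  set F := G.deleteEdges M.edgeSet with hFdef
  let P : Fin 4 → G.Subgraph := ![PA, PB, PC, PD]
  have hP : ∀ i, (P i).IsPerfectMatching := by
    intro i; fin_cases i <;> assumption
  obtain ⟨hodd, heven⟩ := hfam
  have hFadj : ∀ {v w}, F.Adj v w ↔ G.Adj v w ∧ ¬ M.Adj v w := adj_deleteEdges_iff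
  -- `s K`, `t K` are the indices of two families that miss the even cycle `K`.
  have hst : ∀ K : F.ConnectedComponent, ∃ s t : Fin 4, Even (Nat.card K.supp) → s ≠ t ∧
      ∀ v, F.connectedComponentMk v = K →
        (∀ w, (P s).Adj v w → ¬ M.Adj v w) ∧ (∀ w, (P t).Adj v w → ¬ M.Adj v w) := by
    intro K
    by_cases hK : Even (Nat.card K.supp)
    · obtain ⟨S, T, hS, hT, hne, hSK, hTK⟩ := heven K hK
      have idx : ∀ S ∈ ({A, B, C, D} : Set (Set (Sym2 V))),
          ∃ i, S = M.edgeSet ∩ (P i).edgeSet := by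
        rintro S (rfl | rfl | rfl | rfl)
        exacts [⟨0, hA'⟩, ⟨1, hB'⟩, ⟨2, hC'⟩, ⟨3, hD'⟩]
      obtain ⟨s, rfl⟩ := idx S hS
      obtain ⟨t, rfl⟩ := idx T hT
      refine ⟨s, t, fun _ => ⟨fun h => hne (by rw [h]), fun v hv => ⟨fun w h h' => ?_,
        fun w h h' => ?_⟩⟩⟩
      · exact hSK s(v, w) ⟨h', h⟩ v (Sym2.mem_mk_left v w) hv
      · exact hTK s(v, w) ⟨h', h⟩ v (Sym2.mem_mk_left v w) hv
    · exact ⟨0, 0, fun h => absurd h hK⟩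
  choose s t hst using hst
  -- `Q i v`: the matching `P i` is modified on the cycle through `v`.
  let Q : Fin 4 → V → Prop := fun i v =>
    Even (Nat.card (F.connectedComponentMk v).supp) ∧ t (F.connectedComponentMk v) = i
  let R : Fin 4 → V → V → Prop := fun i v w =>
    if Q i v then F.Adj v w ∧ ¬ (P (s (F.connectedComponentMk v))).Adj v w else (P i).Adj v w
  have hcomp : ∀ {v w}, F.Adj v w → F.connectedComponentMk v = F.connectedComponentMk w :=
    fun h => ConnectedComponent.connectedComponentMk_eq_of_adj h
  have hQF : ∀ {i v w}, Q i v → (P i).Adj v w → F.Adj v w := by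
    rintro i v w ⟨hev, rfl⟩ h
    exact hFadj.2 ⟨(P _).adj_sub h, ((hst _ hev).2 v rfl).2 w h⟩
  have hRsymm : ∀ i v w, R i v w → R i w v := by
    intro i v w h
    by_cases hv : Q i v
    · simp only [R, if_pos hv] at h
      have hw : Q i w := by simpa only [Q, hcomp h.1] using hv
      simp only [R, if_pos hw]
      rw [← hcomp h.1]
      exact ⟨h.1.symm, fun h' => h.2 h'.symm⟩
    · simp only [R, if_neg hv] at h
      have hw : ¬ Q i w := by
        intro hw
        apply hv
        have := hcomp (hQF hw h.symm)
        simpa only [Q, this] using hw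
      simp only [R, if_neg hw]
      exact h.symm
  let N : Fin 4 → G.Subgraph := fun i =>
    { verts := Set.univ
      Adj := R i
      adj_sub := by
        intro v w h
        by_cases hv : Q i v
        · simp only [R, if_pos hv] at h
          exact (hFadj.1 h.1).1
        · simp only [R, if_neg hv] at h
          exact (P i).adj_sub h
      edge_vert := fun _ => Set.mem_univ _
      symm := ⟨fun v w => hRsymm i v w⟩ }
  have hN : ∀ i, (N i).IsPerfectMatching := by
    intro i
    rw [Subgraph.isPerfectMatching_iff]
    intro v
    change ∃! w, R i v w
    by_cases hv : Q i v
    · simp only [R, if_pos hv]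
      exact existsUnique_compl hG hM (hP _) ((hst _ hv.1).2 v rfl).1
    · simp only [R, if_neg hv]
      exact Subgraph.isPerfectMatching_iff.1 (hP i) v
  refine Nat.sInf_le ⟨Fin.cons M N, ?_, ?_⟩
  · intro i
    refine Fin.cases hM (fun i => ?_) i
    exact hN i
  · intro e
    induction e using Sym2.ind with | _ v w =>
    intro he
    by_cases hMe : M.Adj v w
    · exact ⟨0, hMe⟩
    have hF : F.Adj v w := hFadj.2 ⟨he, hMe⟩
    suffices h : ∃ i, R i v w by
      obtain ⟨i, hi⟩ := h
      exact ⟨i.succ, hi⟩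
    by_cases hev : Even (Nat.card (F.connectedComponentMk v).supp)
    · by_cases hs : (P (s (F.connectedComponentMk v))).Adj v w
      · refine ⟨s (F.connectedComponentMk v), ?_⟩
        have hv : ¬ Q (s (F.connectedComponentMk v)) v := fun h => (hst _ hev).1 h.2.symm
        simp only [R, if_neg hv]
        exact hs
      · refine ⟨t (F.connectedComponentMk v), ?_⟩
        have hv : Q (t (F.connectedComponentMk v)) v := ⟨hev, rfl⟩
        simp only [R, if_pos hv]
        exact ⟨hF, hs⟩
    · have hv : ∀ i, ¬ Q i v := fun i h => hev h.1
      simp only [R, if_neg (hv _)]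
      obtain ⟨n, f, hf, p, q, r, hp, hq, hr, hlt, hc, va, vb, vc, vd, hu, hset⟩ :=
        hodd _ (Nat.not_even_iff_odd.1 hev)
      refine exists_adj_of_odd hG hM hP hf hp hq hr hlt hc (u := ![va, vb, vc, vd]) ?_ ?_ hF rfl
      · intro i x hx
        obtain ⟨h1, h2, h3, h4⟩ := hu x hx
        rw [hA', exists_mem_inter_iff] at h1
        rw [hB', exists_mem_inter_iff] at h2
        rw [hC', exists_mem_inter_iff] at h3
        rw [hD', exists_mem_inter_iff] at h4
        fin_cases i
        exacts [h1, h2, h3, h4]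
      · have hidx : ∀ x ∈ ({va, vb, vc, vd} : Set V), ∃ i, ![va, vb, vc, vd] i = x := by
          rintro x (rfl | rfl | rfl | rfl)
          exacts [⟨0, rfl⟩, ⟨1, rfl⟩, ⟨2, rfl⟩, ⟨3, rfl⟩]
        intro c hc
        apply hidx
        rw [hset]
        simp only [List.mem_cons, List.not_mem_nil, or_false] at hc
        rcases hc with rfl | rfl | rfl | rfl <;> simp
end

section
/- Let G be a bridgeless cubic graph with τ(G) ≥ 5 and let H be a connected bipartite cubic graph. Then the 3-cut connection G⊗H is a bridgeless cubic graph with τ(G⊗H) ≥ 5. -/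
/-!
A perfect matching is handled as the involution sending every vertex to its partner.

*Lower bound.* Let `A ∋ v` and `B` be the colour classes of `H`. As `H` is regular bipartite it has a
perfect matching, so `|A| = |B|`. In `G ⊗ H` the vertices of `A \ {v}` have neighbours in `B` only,
so a perfect matching pairs them with all vertices of `B` but one; the remaining vertex of `B` has
no neighbour left on its own side and is matched across the cut. Hence every perfect matching of
`G ⊗ H` uses exactly one edge of the principal cut (`IsConnection.existsUnique_cut`), and
contracting the `H`-side to the vertex `u` turns it into a perfect matching of `G`. A `k`-covering
of `G ⊗ H` contracts to a `k`-covering of `G`, so `τ(G) ≤ τ(G ⊗ H)`, as soon as `G ⊗ H` has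
a covering at all (`τ` is an infimum of naturals, equal to `0` on the empty set).

*Existence of a covering.* Every edge of a regular bipartite graph lies in a perfect matching, by
Hall's theorem and induction on the degree (`IsMate.exists_of_regular`). Every edge of `G` lies in
one because `τ(G) ≠ 0`. A perfect matching of `G` through `uuᵢ` and one of `H` through `vvᵢ` glue
to a perfect matching of `G ⊗ H` (`IsConnection.glue`), and these cover all edges.

*Bridges.* Every edge `e = ab` of `G ⊗ H` lies in a perfect matching `M`, and a second edge at `a`
lies in another one `M'`. The symmetric difference of `M` and `M'` is a disjoint union of cycles
containing `e`, so `e` is not a bridge.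
-/


open SimpleGraph

/-- The `3`-cut connection `G₁ ⊗ G₂`. -/
def threeCutConnection {V₁ V₂ : Type*} (G₁ : SimpleGraph V₁) (G₂ : SimpleGraph V₂)
    (u : V₁) (v : V₂) (u₁ u₂ u₃ : V₁) (v₁ v₂ v₃ : V₂) :
    SimpleGraph ({x : V₁ // x ≠ u} ⊕ {y : V₂ // y ≠ v}) :=
  SimpleGraph.fromRel (fun a b =>
    match a, b with
    | Sum.inl a, Sum.inl b => G₁.Adj a.1 b.1
    | Sum.inr a, Sum.inr b => G₂.Adj a.1 b.1
    | Sum.inl a, Sum.inr b =>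
        (a.1 = u₁ ∧ b.1 = v₁) ∨ (a.1 = u₂ ∧ b.1 = v₂) ∨ (a.1 = u₃ ∧ b.1 = v₃)
    | Sum.inr _, Sum.inl _ => False)

open Function

/-! ### Perfect matchings as involutions -/

/-- A perfect matching of `G`, encoded as the map sending each vertex to its partner. -/
structure IsMate {V : Type*} (G : SimpleGraph V) (f : V → V) : Prop where
  inv : ∀ x, f (f x) = x
  adj : ∀ x, G.Adj x (f x)

namespace IsMate

variable {V : Type*} {G : SimpleGraph V}

/-- The perfect matching, as a subgraph, given by a partner map. -/
def toSubgraph {f : V → V} (hf : IsMate G f) : G.Subgraph where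
  verts := Set.univ
  Adj x y := f x = y
  adj_sub := by rintro x _ rfl; exact hf.adj x
  edge_vert := by simp
  symm := ⟨by rintro x _ rfl; exact hf.inv x⟩

lemma isPerfectMatching {f : V → V} (hf : IsMate G f) : hf.toSubgraph.IsPerfectMatching := by
  rw [Subgraph.isPerfectMatching_iff]
  exact fun x => ⟨f x, rfl, fun y hy => Eq.symm hy⟩

lemma exists_of_isPerfectMatching {M : G.Subgraph} (hM : M.IsPerfectMatching) :
    ∃ f, IsMate G f ∧ ∀ x y, M.Adj x y ↔ f x = y := by
  rw [Subgraph.isPerfectMatching_iff] at hM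
  choose f hf hu using hM
  refine ⟨f, ⟨fun x => ((hu _ _ (hf x).symm)).symm, fun x => (hf x).adj_sub⟩, fun x y => ?_⟩
  exact ⟨fun h => (hu _ _ h).symm, fun h => h ▸ hf x⟩

lemma injective {f : V → V} (hf : IsMate G f) : Injective f := fun x y h => by
  rw [← hf.inv x, h, hf.inv]

lemma exists_covering_iff {k : ℕ} : (∃ M : Fin k → G.Subgraph, IsPMCovering G M) ↔
    ∃ F : Fin k → V → V, (∀ i, IsMate G (F i)) ∧ ∀ x y, G.Adj x y → ∃ i, F i x = y := by
  constructor
  · rintro ⟨M, hM, hcov⟩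
    choose F hF hadj using fun i => exists_of_isPerfectMatching (hM i)
    refine ⟨F, hF, fun x y hxy => ?_⟩
    obtain ⟨i, hi⟩ := hcov s(x, y) hxy
    exact ⟨i, (hadj i x y).1 hi⟩
  · rintro ⟨F, hF, hcov⟩
    refine ⟨fun i => (hF i).toSubgraph, fun i => (hF i).isPerfectMatching, fun e he => ?_⟩
    induction e with
    | h x y =>
      obtain ⟨i, hi⟩ := hcov x y he
      exact ⟨i, hi⟩

/-- If every edge of a finite graph lies in a perfect matching, the perfect matching index is
attained by a covering, rather than being the infimum of the empty set. -/
lemma tau_mem [Finite V] (h : ∀ x y, G.Adj x y → ∃ f, IsMate G f ∧ f x = y) :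
    ∃ F : Fin (tau G) → V → V, (∀ i, IsMate G (F i)) ∧
      ∀ x y, G.Adj x y → ∃ i, F i x = y := by
  have hne : {k | ∃ M : Fin k → G.Subgraph, IsPMCovering G M}.Nonempty := by
    -- the family of all perfect matchings is a covering
    obtain ⟨k, ⟨e⟩⟩ := Finite.exists_equiv_fin {f : V → V // IsMate G f}
    refine ⟨k, exists_covering_iff.2 ⟨fun i => (e.symm i).1, fun i => (e.symm i).2, ?_⟩⟩
    intro x y hxy
    obtain ⟨f, hf, hfx⟩ := h x y hxy
    exact ⟨e ⟨f, hf⟩, by simpa using hfx⟩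
  exact exists_covering_iff.1 (Nat.sInf_mem hne)

/-! ### Perfect matchings of regular bipartite graphs -/

/-- Hall's condition holds in a regular graph of positive degree, by counting the edges leaving
a set of vertices. -/
lemma exists_of_regular_succ [Finite V] {r : ℕ}
    (hr : ∀ x, (G.neighborSet x).ncard = r + 1) (hb : G.IsBipartite) : ∃ f, IsMate G f := by
  classical
  have := Fintype.ofFinite V
  obtain ⟨p, q, hpq⟩ := hb.exists_isBipartiteWith
  have hdeg : ∀ x, (G.neighborFinset x).card = r + 1 := fun x => by
    rw [← hr x, Set.ncard_eq_toFinset_card', neighborFinset_def]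
  obtain ⟨M, hM⟩ := exists_isPerfectMatching_of_forall_ncard_le hpq fun s => by
    lift s to Finset V using s.toFinite
    have hN : (⋃ x ∈ (s : Set V), G.neighborSet x) = (s.biUnion fun x => G.neighborFinset x : Finset V) := by
      ext; simp
    rw [hN, Set.ncard_coe_finset, Set.ncard_coe_finset]
    refine Nat.le_of_mul_le_mul_right (c := r + 1)
      (Finset.card_mul_le_card_mul G.Adj (fun a ha => ?_) fun b hb => ?_) (Nat.succ_pos r)
    · rw [← hdeg a]
      refine Finset.card_le_card fun y hy => ?_
      simp only [Finset.bipartiteAbove, Finset.mem_filter, Finset.mem_biUnion]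
      exact ⟨⟨a, ha, hy⟩, by simpa using hy⟩
    · rw [← hdeg b]
      refine Finset.card_le_card fun y hy => ?_
      simp only [Finset.bipartiteBelow, Finset.mem_filter] at hy
      simpa using hy.2.symm
  obtain ⟨f, hf, -⟩ := exists_of_isPerfectMatching hM
  exact ⟨f, hf⟩

/-- Every edge of a regular bipartite graph lies in a perfect matching: remove one perfect matching
and induct on the degree. -/
lemma exists_of_regular [Finite V] (r : ℕ) : ∀ (G : SimpleGraph V),
    (∀ x, (G.neighborSet x).ncard = r) → G.IsBipartite →
    ∀ x y, G.Adj x y → ∃ f, IsMate G f ∧ f x = y := by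
  induction r with
  | zero =>
    intro G hr _ x y hxy
    have := (Set.ncard_eq_zero).1 (hr x)
    exact absurd (show y ∈ G.neighborSet x from hxy) (by simp [this])
  | succ r ih =>
    intro G hr hb x y hxy
    obtain ⟨f, hf⟩ := exists_of_regular_succ hr hb
    by_cases hfx : f x = y
    · exact ⟨f, hf, hfx⟩
    let G' : SimpleGraph V :=
      { Adj := fun a b => G.Adj a b ∧ f a ≠ b
        symm := ⟨fun a b h => ⟨h.1.symm, fun h' => h.2 (by rw [← h', hf.inv])⟩⟩
        loopless := ⟨fun a h => G.loopless.irrefl a h.1⟩ }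
    have hle : G' ≤ G := fun a b h => h.1
    obtain ⟨g, hg, hgx⟩ := ih G' (fun a => by
      have : G'.neighborSet a = G.neighborSet a \ {f a} := by
        ext b
        simp [G', eq_comm]
      have hmem : f a ∈ G.neighborSet a := hf.adj a
      rw [this, Set.ncard_sdiff_singleton_of_mem hmem, hr]; rfl)
      (hb.mono_left hle) x y ⟨hxy, hfx⟩
    exact ⟨g, ⟨hg.inv, fun a => hle (hg.adj a)⟩, hgx⟩

/-! ### Bridges and perfect matchings -/

/-- An edge lying in one perfect matching but not in another is not a bridge, since it lies on
a cycle of the symmetric difference. -/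
lemma not_isBridge [Finite V] {f g : V → V} (hf : IsMate G f) (hg : IsMate G g) {x : V}
    (hx : g x ≠ f x) : ¬ G.IsBridge s(x, f x) := by
  have hc := Subgraph.IsPerfectMatching.symmDiff_isCycles hf.isPerfectMatching hg.isPerfectMatching
  have hadj : (symmDiff hf.toSubgraph.spanningCoe hg.toSubgraph.spanningCoe).Adj x (f x) := by
    simp only [symmDiff, SimpleGraph.sup_adj, SimpleGraph.sdiff_adj]
    exact Or.inl ⟨rfl, hx⟩
  rw [isBridge_iff, not_not]
  refine (hc.reachable_deleteEdges hadj).mono ?_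
  refine sdiff_le_sdiff_right ?_
  exact symmDiff_le_sup.trans (sup_le (Subgraph.spanningCoe_le _) (Subgraph.spanningCoe_le _))

end IsMate

/-! ### The 3-cut connection -/

/-- `T` is the `3`-cut connection of `G` and `H` at `u` and `v`, with principal cut
`{uu i, vv i}`, `i : Fin 3`. -/
structure IsConnection {V W : Type*} (G : SimpleGraph V) (H : SimpleGraph W) (u : V) (v : W)
    (uu : Fin 3 → V) (vv : Fin 3 → W) (T : SimpleGraph ({x : V // x ≠ u} ⊕ {y : W // y ≠ v})) :
    Prop where
  uu_inj : Injective uu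
  vv_inj : Injective vv
  adj_u : ∀ x, G.Adj u x ↔ ∃ i, uu i = x
  adj_v : ∀ y, H.Adj v y ↔ ∃ i, vv i = y
  inl_inl : ∀ a b, T.Adj (Sum.inl a) (Sum.inl b) ↔ G.Adj a.1 b.1
  inr_inr : ∀ a b, T.Adj (Sum.inr a) (Sum.inr b) ↔ H.Adj a.1 b.1
  inl_inr : ∀ a b, T.Adj (Sum.inl a) (Sum.inr b) ↔ ∃ i, uu i = a.1 ∧ vv i = b.1

namespace IsConnection

variable {V W : Type*} {G : SimpleGraph V} {H : SimpleGraph W} {u : V} {v : W}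
  {uu : Fin 3 → V} {vv : Fin 3 → W} {T : SimpleGraph ({x : V // x ≠ u} ⊕ {y : W // y ≠ v})}

lemma uu_ne (h : IsConnection G H u v uu vv T) (i : Fin 3) : uu i ≠ u :=
  ((h.adj_u _).2 ⟨i, rfl⟩).ne'

lemma vv_ne (h : IsConnection G H u v uu vv T) (i : Fin 3) : vv i ≠ v :=
  ((h.adj_v _).2 ⟨i, rfl⟩).ne'

/-- The neighbours of a vertex on the `G`-side are those in `G`, with `u` replaced by the other
end of the cut edge. -/
lemma ncard_inl (h : IsConnection G H u v uu vv T) (a : {x : V // x ≠ u}) :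
    (T.neighborSet (Sum.inl a)).ncard = (G.neighborSet a.1).ncard := by
  classical
  obtain ⟨i, hi⟩ : ∃ i, G.Adj u a.1 → uu i = a.1 := by
    by_cases hu : G.Adj u a.1
    · obtain ⟨i, hi⟩ := (h.adj_u _).1 hu
      exact ⟨i, fun _ => hi⟩
    · exact ⟨0, fun hu' => absurd hu' hu⟩
  let φ : V → {x : V // x ≠ u} ⊕ {y : W // y ≠ v} := fun x =>
    if hx : x = u then Sum.inr ⟨vv i, h.vv_ne i⟩ else Sum.inl ⟨x, hx⟩
  have hφ : Injective φ := by
    intro x y hxy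
    simp only [φ] at hxy
    split_ifs at hxy <;> simp_all
  rw [← Set.ncard_image_of_injective _ hφ]
  congr 1
  ext z
  simp only [mem_neighborSet, Set.mem_image]
  constructor
  · intro hz
    rcases z with z | z
    · exact ⟨z.1, (h.inl_inl _ _).1 hz, by simp [φ, z.2]⟩
    · obtain ⟨j, hj, hjz⟩ := (h.inl_inr _ _).1 hz
      have hu : G.Adj u a.1 := (h.adj_u _).2 ⟨j, hj⟩
      have : j = i := h.uu_inj (hj.trans (hi hu).symm)
      subst this
      exact ⟨u, hu.symm, by simp [φ, hjz]⟩
  · rintro ⟨x, hx, rfl⟩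
    by_cases hxu : x = u
    · subst hxu
      simp only [φ, dif_pos]
      exact (h.inl_inr _ _).2 ⟨i, hi hx.symm, rfl⟩
    · simp only [φ, dif_neg hxu]
      exact (h.inl_inl _ _).2 hx

lemma ncard_inr (h : IsConnection G H u v uu vv T) (a : {x : W // x ≠ v}) :
    (T.neighborSet (Sum.inr a)).ncard = (H.neighborSet a.1).ncard := by
  classical
  obtain ⟨i, hi⟩ : ∃ i, H.Adj v a.1 → vv i = a.1 := by
    by_cases hu : H.Adj v a.1
    · obtain ⟨i, hi⟩ := (h.adj_v _).1 hu
      exact ⟨i, fun _ => hi⟩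
    · exact ⟨0, fun hu' => absurd hu' hu⟩
  let φ : W → {x : V // x ≠ u} ⊕ {y : W // y ≠ v} := fun x =>
    if hx : x = v then Sum.inl ⟨uu i, h.uu_ne i⟩ else Sum.inr ⟨x, hx⟩
  have hφ : Injective φ := by
    intro x y hxy
    simp only [φ] at hxy
    split_ifs at hxy <;> simp_all
  rw [← Set.ncard_image_of_injective _ hφ]
  congr 1
  ext z
  simp only [mem_neighborSet, Set.mem_image]
  constructor
  · intro hz
    rcases z with z | z
    · obtain ⟨j, hjz, hj⟩ := (h.inl_inr _ _).1 hz.symm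
      have hu : H.Adj v a.1 := (h.adj_v _).2 ⟨j, hj⟩
      have : j = i := h.vv_inj (hj.trans (hi hu).symm)
      subst this
      exact ⟨v, hu.symm, by simp [φ, hjz]⟩
    · exact ⟨z.1, (h.inr_inr _ _).1 hz, by simp [φ, z.2]⟩
  · rintro ⟨x, hx, rfl⟩
    by_cases hxu : x = v
    · subst hxu
      simp only [φ, dif_pos]
      exact ((h.inl_inr _ _).2 ⟨i, rfl, hi hx.symm⟩).symm
    · simp only [φ, dif_neg hxu]
      exact (h.inr_inr _ _).2 hx

/-! ### Gluing perfect matchings -/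

/-- Perfect matchings of `G` and `H` through corresponding edges `u (uu i)` and `v (vv i)` glue
to a perfect matching of the connection. -/
lemma glue (h : IsConnection G H u v uu vv T) {f : V → V} {g : W → W} (hf : IsMate G f)
    (hg : IsMate H g) {i : Fin 3} (hfu : f u = uu i) (hgv : g v = vv i) :
    ∃ m, IsMate T m ∧ m (Sum.inl ⟨uu i, h.uu_ne i⟩) = Sum.inr ⟨vv i, h.vv_ne i⟩ ∧
      (∀ x y : {x : V // x ≠ u}, f x.1 = y.1 → m (Sum.inl x) = Sum.inl y) ∧
      (∀ x y : {x : W // x ≠ v}, g x.1 = y.1 → m (Sum.inr x) = Sum.inr y) := by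
  classical
  have hfi : f (uu i) = u := by rw [← hfu, hf.inv]
  have hgi : g (vv i) = v := by rw [← hgv, hg.inv]
  let m : {x : V // x ≠ u} ⊕ {y : W // y ≠ v} → {x : V // x ≠ u} ⊕ {y : W // y ≠ v} :=
    Sum.elim
      (fun x => if hx : f x.1 = u then Sum.inr ⟨vv i, h.vv_ne i⟩ else Sum.inl ⟨f x.1, hx⟩)
      (fun y => if hy : g y.1 = v then Sum.inl ⟨uu i, h.uu_ne i⟩ else Sum.inr ⟨g y.1, hy⟩)
  have hfx : ∀ x, f x = u → x = uu i := fun x hx => by rw [← hfu, ← hx, hf.inv]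
  have hgy : ∀ y, g y = v → y = vv i := fun y hy => by rw [← hgv, ← hy, hg.inv]
  refine ⟨m, ⟨?_, ?_⟩, by simp [m, hfi], ?_, ?_⟩
  · rintro (⟨x, hx⟩ | ⟨y, hy⟩)
    · by_cases hxu : f x = u
      · obtain rfl := hfx x hxu
        simp [m, hfi, hgi]
      · simp [m, hxu, hf.inv, hx]
    · by_cases hyv : g y = v
      · obtain rfl := hgy y hyv
        simp [m, hfi, hgi]
      · simp [m, hyv, hg.inv, hy]
  · rintro (⟨x, hx⟩ | ⟨y, hy⟩)
    · by_cases hxu : f x = u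
      · simp only [m, Sum.elim_inl, hxu, dif_pos]
        exact (h.inl_inr _ _).2 ⟨i, (hfx x hxu).symm, rfl⟩
      · simp only [m, Sum.elim_inl, hxu, dif_neg, not_false_eq_true]
        exact (h.inl_inl _ _).2 (hf.adj x)
    · by_cases hyv : g y = v
      · simp only [m, Sum.elim_inr, hyv, dif_pos]
        exact ((h.inl_inr _ _).2 ⟨i, rfl, (hgy y hyv).symm⟩).symm
      · simp only [m, Sum.elim_inr, hyv, dif_neg, not_false_eq_true]
        exact (h.inr_inr _ _).2 (hg.adj y)
  · rintro x y hxy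
    simp [m, hxy, y.2]
  · rintro x y hxy
    simp [m, hxy, y.2]

lemma exists_mate (h : IsConnection G H u v uu vv T)
    (hG : ∀ x y, G.Adj x y → ∃ f, IsMate G f ∧ f x = y)
    (hH : ∀ x y, H.Adj x y → ∃ f, IsMate H f ∧ f x = y) :
    ∀ x y, T.Adj x y → ∃ f, IsMate T f ∧ f x = y := by
  have hGu : ∀ i, ∃ f, IsMate G f ∧ f u = uu i := fun i => hG _ _ ((h.adj_u _).2 ⟨i, rfl⟩)
  have hHv : ∀ i, ∃ f, IsMate H f ∧ f v = vv i := fun i => hH _ _ ((h.adj_v _).2 ⟨i, rfl⟩)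
  have hcut : ∀ a b, T.Adj (Sum.inl a) (Sum.inr b) →
      ∃ f, IsMate T f ∧ f (Sum.inl a) = Sum.inr b := by
    rintro ⟨a, ha⟩ ⟨b, hb⟩ hab
    obtain ⟨i, hi, hi'⟩ := (h.inl_inr _ _).1 hab
    dsimp only at hi hi'
    subst hi hi'
    obtain ⟨f, hf, hfu⟩ := hGu i
    obtain ⟨g, hg, hgv⟩ := hHv i
    obtain ⟨m, hm, h1, -⟩ := h.glue hf hg hfu hgv
    exact ⟨m, hm, h1⟩
  rintro (x | x) (y | y) hxy
  · obtain ⟨f, hf, hfx⟩ := hG _ _ ((h.inl_inl _ _).1 hxy)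
    obtain ⟨i, hi⟩ := (h.adj_u _).1 (hf.adj u)
    obtain ⟨g, hg, hgv⟩ := hHv i
    obtain ⟨m, hm, -, h2, -⟩ := h.glue hf hg hi.symm hgv
    exact ⟨m, hm, h2 x y hfx⟩
  · exact hcut x y hxy
  · obtain ⟨m, hm, hmx⟩ := hcut y x hxy.symm
    exact ⟨m, hm, by rw [← hmx, hm.inv]⟩
  · obtain ⟨g, hg, hgx⟩ := hH _ _ ((h.inr_inr _ _).1 hxy)
    obtain ⟨i, hi⟩ := (h.adj_v _).1 (hg.adj v)
    obtain ⟨f, hf, hfu⟩ := hGu i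
    obtain ⟨m, hm, -, -, h3⟩ := h.glue hf hg hfu hi.symm
    exact ⟨m, hm, h3 x y hgx⟩

/-! ### Contracting perfect matchings -/

/-- A perfect matching of the connection uses exactly one edge of the principal cut when `H` is
bipartite with a perfect matching `g`. -/
lemma existsUnique_cut [Finite W] (h : IsConnection G H u v uu vv T) (c : H.Coloring (Fin 2))
    {g : W → W} (hg : IsMate H g) {m : {x : V // x ≠ u} ⊕ {y : W // y ≠ v} → _}
    (hm : IsMate T m) :
    ∃! i, m (Sum.inl ⟨uu i, h.uu_ne i⟩) = Sum.inr ⟨vv i, h.vv_ne i⟩ := by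
  classical
  have := Fintype.ofFinite W
  have two : ∀ a b d : Fin 2, a ≠ b → b ≠ d → a = d := by decide
  -- `A` is the colour class of `v` without `v`, and `B` is the other colour class
  let A : Finset W := Finset.univ.filter fun x => c x = c v ∧ x ≠ v
  let B : Finset W := Finset.univ.filter fun x => c x ≠ c v
  have hvB : ∀ i, vv i ∈ B := fun i => by
    simpa [B] using (c.valid ((h.adj_v _).2 ⟨i, rfl⟩)).symm
  have hAB : B.card = A.card + 1 := by
    have hvA : v ∉ A := by simp [A]
    rw [← Finset.card_insert_of_notMem hvA]
    refine (Finset.card_bij' (fun x _ => g x) (fun x _ => g x) ?_ ?_ ?_ ?_).symm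
    · intro x hx
      have hx' : c x = c v := by
        rcases Finset.mem_insert.1 hx with rfl | hx
        · rfl
        · exact (Finset.mem_filter.1 hx).2.1
      simpa [B, ← hx'] using (c.valid (hg.adj x)).symm
    · intro x hx
      have hx' : c x ≠ c v := by simpa [B] using hx
      have : c (g x) = c v := two _ _ _ (c.valid (hg.adj x)).symm hx'
      by_cases hv : g x = v <;> simp [A, this, hv]
    · exact fun x _ => hg.inv x
    · exact fun x _ => hg.inv x
  have hmA : ∀ x ∈ A, ∃ y ∈ B, ∃ (hx : x ≠ v) (hy : y ≠ v),
      m (Sum.inr ⟨x, hx⟩) = Sum.inr ⟨y, hy⟩ := by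
    intro x hx
    obtain ⟨hxc, hxv⟩ := (Finset.mem_filter.1 hx).2
    have hadj := hm.adj (Sum.inr ⟨x, hxv⟩)
    rcases hmx : m (Sum.inr ⟨x, hxv⟩) with a | y
    · rw [hmx] at hadj
      obtain ⟨i, -, hi⟩ := (h.inl_inr _ _).1 hadj.symm
      have := hvB i
      simp only [B, Finset.mem_filter] at this
      exact absurd hxc (by rw [← show vv i = x from hi]; exact this.2)
    · rw [hmx] at hadj
      have := c.valid ((h.inr_inr _ _).1 hadj)
      refine ⟨y.1, ?_, hxv, y.2, hmx⟩
      simp only [B, Finset.mem_filter, Finset.mem_univ, true_and]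
      exact fun h' => this (hxc.trans h'.symm)
  -- `p x` is the partner of `x ∈ A`
  choose! p hpB hpv hpv' hp using hmA
  have hpinj : Set.InjOn p A := by
    intro x hx y hy hxy
    have h1 := hp x hx
    have h2 := hp y hy
    have : m (Sum.inr ⟨x, hpv x hx⟩) = m (Sum.inr ⟨y, hpv y hy⟩) := by
      rw [h1, h2]; simp [hxy]
    simpa using hm.injective this
  have himg : A.image p ⊆ B := fun y hy => by
    obtain ⟨x, hx, rfl⟩ := Finset.mem_image.1 hy
    exact hpB x hx
  have hone : (B \ A.image p).card = 1 := by
    rw [Finset.card_sdiff_of_subset himg, Finset.card_image_of_injOn hpinj, hAB]; omega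
  obtain ⟨b, hb⟩ := Finset.card_eq_one.1 hone
  have hbmem : b ∈ B \ A.image p := by rw [hb]; simp
  obtain ⟨hbB, hbp⟩ := Finset.mem_sdiff.1 hbmem
  have hbc : c b ≠ c v := (Finset.mem_filter.1 hbB).2
  have hbv : b ≠ v := fun h' => hbc (by rw [h'])
  have huniq : ∀ i, m (Sum.inl ⟨uu i, h.uu_ne i⟩) = Sum.inr ⟨vv i, h.vv_ne i⟩ → vv i = b := by
    intro i hi
    have : vv i ∈ B \ A.image p := by
      refine Finset.mem_sdiff.2 ⟨hvB i, fun hmem => ?_⟩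
      obtain ⟨x, hx, hxi⟩ := Finset.mem_image.1 hmem
      have h1 := hp x hx
      have : m (Sum.inr ⟨x, hpv x hx⟩) = m (Sum.inl ⟨uu i, h.uu_ne i⟩) := by
        rw [h1, hi]; simp [hxi]
      simpa using hm.injective this
    rw [hb] at this
    simpa using this
  have hadj := hm.adj (Sum.inr ⟨b, hbv⟩)
  rcases hmb : m (Sum.inr ⟨b, hbv⟩) with a | y
  · rw [hmb] at hadj
    obtain ⟨i, hi, hi'⟩ := (h.inl_inr _ _).1 hadj.symm
    refine ⟨i, ?_, fun j hj => h.vv_inj ((huniq j hj).trans hi'.symm)⟩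
    have ha : (⟨uu i, h.uu_ne i⟩ : {x : V // x ≠ u}) = a := Subtype.ext hi
    have hb' : (⟨vv i, h.vv_ne i⟩ : {x : W // x ≠ v}) = ⟨b, hbv⟩ := Subtype.ext hi'
    dsimp only
    rw [ha, hb', ← hmb, hm.inv]
  · exfalso
    -- a partner of `b` on the `H`-side would lie in `A`, making `b` a value of `p`
    rw [hmb] at hadj
    have hyA : y.1 ∈ A := by
      have := c.valid ((h.inr_inr _ _).1 hadj)
      simp only [A, Finset.mem_filter, Finset.mem_univ, true_and]
      exact ⟨two _ _ _ this.symm hbc, y.2⟩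
    refine hbp (Finset.mem_image.2 ⟨y.1, hyA, ?_⟩)
    have h1 := hp y.1 hyA
    have h2 : m (Sum.inr y) = Sum.inr ⟨b, hbv⟩ := by rw [← hmb, hm.inv]
    have := h1.symm.trans h2
    simpa using this

/-- A perfect matching of the connection that uses exactly one cut edge contracts to a perfect
matching of `G`. -/
lemma contract (h : IsConnection G H u v uu vv T)
    {m : {x : V // x ≠ u} ⊕ {y : W // y ≠ v} → _} (hm : IsMate T m)
    (hcut : ∃! i, m (Sum.inl ⟨uu i, h.uu_ne i⟩) = Sum.inr ⟨vv i, h.vv_ne i⟩) :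
    ∃ f, IsMate G f ∧
      (∀ i, m (Sum.inl ⟨uu i, h.uu_ne i⟩) = Sum.inr ⟨vv i, h.vv_ne i⟩ → f u = uu i) ∧
      (∀ x y : {x : V // x ≠ u}, m (Sum.inl x) = Sum.inl y → f x.1 = y.1) := by
  classical
  obtain ⟨i, hi, hui⟩ := hcut
  dsimp only at hi hui
  let f : V → V := fun x =>
    if hx : x = u then uu i else Sum.elim (fun y => y.1) (fun _ => u) (m (Sum.inl ⟨x, hx⟩))
  have hfu : f u = uu i := by simp [f]
  have hfui : f (uu i) = u := by simp [f, h.uu_ne i, hi]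
  have hfl : ∀ x y : {x : V // x ≠ u}, m (Sum.inl x) = Sum.inl y → f x.1 = y.1 := by
    intro x y hxy
    simp [f, x.2, hxy]
  have hfr : ∀ (x : {x : V // x ≠ u}) b, m (Sum.inl x) = Sum.inr b → x.1 = uu i := by
    rintro ⟨x, hx⟩ ⟨b, hb⟩ hxb
    have hadj := hm.adj (Sum.inl ⟨x, hx⟩)
    rw [hxb] at hadj
    obtain ⟨j, hj, hj'⟩ := (h.inl_inr _ _).1 hadj
    dsimp only at hj hj'
    subst hj hj'
    exact congrArg uu (hui j hxb)
  refine ⟨f, ⟨fun x => ?_, fun x => ?_⟩, fun j hj => by rw [hui j hj, hfu], hfl⟩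
  · by_cases hx : x = u
    · rw [hx, hfu, hfui]
    · rcases hmx : m (Sum.inl ⟨x, hx⟩) with y | b
      · rw [hfl ⟨x, hx⟩ y hmx, hfl y ⟨x, hx⟩ (by rw [← hmx, hm.inv])]
      · rw [show x = uu i from hfr ⟨x, hx⟩ b hmx, hfui, hfu]
  · by_cases hx : x = u
    · rw [hx, hfu]
      exact (h.adj_u _).2 ⟨i, rfl⟩
    · rcases hmx : m (Sum.inl ⟨x, hx⟩) with y | b
      · rw [hfl ⟨x, hx⟩ y hmx]
        have := hm.adj (Sum.inl ⟨x, hx⟩)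
        rw [hmx] at this
        exact (h.inl_inl _ _).1 this
      · rw [show x = uu i from hfr ⟨x, hx⟩ b hmx, hfui]
        exact ((h.adj_u _).2 ⟨i, rfl⟩).symm

/-- Contracting a covering of the connection gives a covering of `G` of the same size. -/
lemma contract_covering [Finite W] (h : IsConnection G H u v uu vv T) (c : H.Coloring (Fin 2))
    {g : W → W} (hg : IsMate H g) {k : ℕ}
    {F : Fin k → {x : V // x ≠ u} ⊕ {y : W // y ≠ v} → _} (hF : ∀ i, IsMate T (F i))
    (hcov : ∀ x y, T.Adj x y → ∃ i, F i x = y) :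
    ∃ F' : Fin k → V → V, (∀ i, IsMate G (F' i)) ∧
      ∀ x y, G.Adj x y → ∃ i, F' i x = y := by
  choose F' hF' hu hl using fun i => h.contract (hF i) (h.existsUnique_cut c hg (hF i))
  have hcovu : ∀ y, G.Adj u y → ∃ i, F' i u = y := by
    intro y hy
    obtain ⟨j, rfl⟩ := (h.adj_u _).1 hy
    obtain ⟨i, hi⟩ := hcov (Sum.inl ⟨uu j, h.uu_ne j⟩) (Sum.inr ⟨vv j, h.vv_ne j⟩)
      ((h.inl_inr _ _).2 ⟨j, rfl, rfl⟩)
    exact ⟨i, hu i j hi⟩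
  refine ⟨F', hF', fun x y hxy => ?_⟩
  by_cases hx : x = u
  · subst hx
    exact hcovu y hxy
  by_cases hy : y = u
  · subst hy
    obtain ⟨i, hi⟩ := hcovu x hxy.symm
    exact ⟨i, by rw [← hi, (hF' i).inv]⟩
  obtain ⟨i, hi⟩ := hcov (Sum.inl ⟨x, hx⟩) (Sum.inl ⟨y, hy⟩) ((h.inl_inl _ _).2 hxy)
  exact ⟨i, hl i _ _ hi⟩

end IsConnection

/-! ### Identification of `threeCutConnection` -/

/-- Three vertices exhausting a neighbourhood of size three are distinct. -/
lemma injective_of_ncard {V : Type*} {s : Set V} {a b c : V} (hs : s = {a, b, c})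
    (hcard : s.ncard = 3) : Injective ![a, b, c] := by
  classical
  have hs' : s = (({a, b, c} : Finset V) : Set V) := by simp [hs]
  rw [hs', Set.ncard_coe_finset] at hcard
  have hle : ∀ x y : V, ({x, y} : Finset V).card ≤ 2 := fun x y => Finset.card_le_two
  have hab : a ≠ b := by
    rintro rfl
    have := hle a c
    simp only [Finset.insert_eq_of_mem, Finset.mem_insert_self] at hcard
    omega
  have hbc : b ≠ c := by
    rintro rfl
    have := hle a b
    simp only [Finset.pair_eq_singleton] at hcard
    omega
  have hac : a ≠ c := by
    rintro rfl
    have := hle b a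
    rw [Finset.insert_eq_of_mem (by simp)] at hcard
    omega
  intro i j hij
  fin_cases i <;> fin_cases j <;> simp_all

lemma isConnection_threeCutConnection {V W : Type*} {G : SimpleGraph V} {H : SimpleGraph W}
    {u : V} {v : W} {u₁ u₂ u₃ : V} {v₁ v₂ v₃ : W}
    (hNu : G.neighborSet u = {u₁, u₂, u₃}) (hNv : H.neighborSet v = {v₁, v₂, v₃})
    (hu : (G.neighborSet u).ncard = 3) (hv : (H.neighborSet v).ncard = 3) :
    IsConnection G H u v ![u₁, u₂, u₃] ![v₁, v₂, v₃]
      (threeCutConnection G H u v u₁ u₂ u₃ v₁ v₂ v₃) where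
  uu_inj := injective_of_ncard hNu hu
  vv_inj := injective_of_ncard hNv hv
  adj_u x := by
    rw [← mem_neighborSet, hNu]
    simp [Fin.exists_fin_succ, eq_comm]
  adj_v x := by
    rw [← mem_neighborSet, hNv]
    simp [Fin.exists_fin_succ, eq_comm]
  inl_inl a b := by
    simp only [threeCutConnection, fromRel_adj, ne_eq, Sum.inl.injEq]
    exact ⟨fun h => h.2.elim id fun h => h.symm, fun h => ⟨fun h' => h.ne (by rw [h']), Or.inl h⟩⟩
  inr_inr a b := by
    simp only [threeCutConnection, fromRel_adj, ne_eq, Sum.inr.injEq]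
    exact ⟨fun h => h.2.elim id fun h => h.symm, fun h => ⟨fun h' => h.ne (by rw [h']), Or.inl h⟩⟩
  inl_inr a b := by
    simp [threeCutConnection, fromRel_adj, Fin.exists_fin_succ, eq_comm]

/-- If `G` is a bridgeless cubic graph with `τ(G) ≥ 5` and `H` is a connected
bipartite cubic graph, then `G ⊗ H` is a bridgeless cubic graph with `τ(G ⊗ H) ≥ 5`. -/
theorem tau_threeCutConnection_with_bipartite {V W : Type*} [Fintype V] [Fintype W]
    (G : SimpleGraph V) (H : SimpleGraph W)
    [DecidableRel G.Adj] [DecidableRel H.Adj]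
    (hG : G.IsRegularOfDegree 3)
    (hbridgeless : ∀ e ∈ G.edgeSet, ¬ G.IsBridge e)
    (htau : 5 ≤ tau G)
    (hH : H.IsRegularOfDegree 3) (hHconn : H.Connected) (hHbip : H.Colorable 2)
    (u : V) (v : W) (u₁ u₂ u₃ : V) (v₁ v₂ v₃ : W)
    (hNu : G.neighborSet u = {u₁, u₂, u₃}) (hNv : H.neighborSet v = {v₁, v₂, v₃}) :
    (∀ w, Nat.card ((threeCutConnection G H u v u₁ u₂ u₃ v₁ v₂ v₃).neighborSet w) = 3) ∧
    (∀ e ∈ (threeCutConnection G H u v u₁ u₂ u₃ v₁ v₂ v₃).edgeSet,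
        ¬ (threeCutConnection G H u v u₁ u₂ u₃ v₁ v₂ v₃).IsBridge e) ∧
    5 ≤ tau (threeCutConnection G H u v u₁ u₂ u₃ v₁ v₂ v₃) := by
  classical
  have hG3 : ∀ x, (G.neighborSet x).ncard = 3 := fun x => by
    rw [← hG x, ← coe_neighborFinset, Set.ncard_coe_finset, card_neighborFinset_eq_degree]
  have hH3 : ∀ x, (H.neighborSet x).ncard = 3 := fun x => by
    rw [← hH x, ← coe_neighborFinset, Set.ncard_coe_finset, card_neighborFinset_eq_degree]
  have hT := isConnection_threeCutConnection hNu hNv (hG3 u) (hH3 v)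
  set T := threeCutConnection G H u v u₁ u₂ u₃ v₁ v₂ v₃
  have hreg : ∀ w, (T.neighborSet w).ncard = 3 := by
    rintro (a | b)
    · rw [hT.ncard_inl, hG3]
    · rw [hT.ncard_inr, hH3]
  have hGcov : ∀ x y, G.Adj x y → ∃ f, IsMate G f ∧ f x = y := by
    -- an empty set of coverings would have infimum `0`
    have hne : {k | ∃ M : Fin k → G.Subgraph, IsPMCovering G M}.Nonempty := by
      rw [Set.nonempty_iff_ne_empty]
      intro h0
      rw [tau, h0, Nat.sInf_empty] at htau
      omega
    obtain ⟨k, hk⟩ := hne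
    obtain ⟨F, hF, hcov⟩ := IsMate.exists_covering_iff.1 hk
    intro x y hxy
    obtain ⟨i, hi⟩ := hcov x y hxy
    exact ⟨F i, hF i, hi⟩
  have hHcov := IsMate.exists_of_regular 3 H hH3 hHbip
  have hTcov := hT.exists_mate hGcov hHcov
  refine ⟨hreg, fun e he => ?_, ?_⟩
  · induction e with
    | h x y =>
      obtain ⟨f, hf, rfl⟩ := hTcov x y he
      obtain ⟨z, hz, hzf⟩ := Set.exists_ne_of_one_lt_ncard
        (show 1 < (T.neighborSet x).ncard by rw [hreg]; norm_num) (f x)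
      obtain ⟨g, hg, rfl⟩ := hTcov x z hz
      exact hf.not_isBridge hg hzf
  · obtain ⟨F, hF, hcov⟩ := IsMate.tau_mem hTcov
    obtain ⟨g, hg, -⟩ := hHcov v v₁ (by rw [← mem_neighborSet, hNv]; simp)
    obtain ⟨c⟩ := hHbip
    refine htau.trans (Nat.sInf_le ?_)
    exact IsMate.exists_covering_iff.2 (hT.contract_covering c hg hF hcov)
end

section
/- Let G be a bridgeless cubic graph with τ(G) = 4. Then G has an odd covering of size 5, i.e., a family of 5 perfect matchings such that every edge of G is contained in an odd number of them. -/
/-!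
At each vertex of a cubic graph, four perfect matchings contribute four incidences, spread over
three edges. If the matchings cover the graph, each of the three edges is hit at least once, so
exactly one of them is hit twice and the other two once (`exists_double_edge`). Hence the edges
covered twice form a perfect matching, and adding it to the covering raises their multiplicity to
three while every other edge keeps multiplicity one.
-/

open SimpleGraph

/-- An odd covering of `G` of size `k`: a family of `k` perfect matchings such that
every edge of `G` lies in an odd number of them. -/
def IsOddCovering {V : Type*} (G : SimpleGraph V) {k : ℕ}
    (M : Fin k → G.Subgraph) : Prop :=
  (∀ i, (M i).IsPerfectMatching) ∧
    ∀ e ∈ G.edgeSet, Odd (Nat.card {i : Fin k // e ∈ (M i).edgeSet})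

open Classical in
/-- The number of members of the family `M` containing the edge `vw`. -/
noncomputable def coverCount {V : Type*} {G : SimpleGraph V} {k : ℕ}
    (M : Fin k → G.Subgraph) (v w : V) : ℕ :=
  (Finset.univ.filter fun i => (M i).Adj v w).card

theorem coverCount_comm {V : Type*} {G : SimpleGraph V} {k : ℕ}
    (M : Fin k → G.Subgraph) (v w : V) : coverCount M v w = coverCount M w v := by
  unfold coverCount
  congr 1
  ext i
  simp [(M i).adj_comm v w]

/-- The incidences at `v` of a family of `k` perfect matchings add up to `k`. -/
theorem sum_coverCount {V : Type*} [Fintype V] (G : SimpleGraph V) [DecidableRel G.Adj] {k : ℕ}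
    (M : Fin k → G.Subgraph) (hM : ∀ i, (M i).IsPerfectMatching) (v : V) :
    ∑ w ∈ G.neighborFinset v, coverCount M v w = k := by
  classical
  choose f hf hu using fun i => (hM i).1 ((hM i).2 v)
  have h := Finset.card_eq_sum_card_fiberwise (s := (Finset.univ : Finset (Fin k)))
    (t := G.neighborFinset v) (f := f) (fun i _ => by simpa using (hf i).adj_sub)
  rw [Finset.card_univ, Fintype.card_fin] at h
  conv_rhs => rw [h]
  refine Finset.sum_congr rfl fun w _ => ?_
  unfold coverCount
  congr 1
  ext i
  simp only [Finset.mem_filter, Finset.mem_univ, true_and]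
  exact ⟨fun hw => (hu i w hw).symm, fun hw => hw ▸ hf i⟩

/-- In a 4-covering of a cubic graph, each vertex is on exactly one edge covered twice, and its
other edges are covered once. -/
theorem exists_double_edge {V : Type*} [Fintype V] (G : SimpleGraph V) [DecidableRel G.Adj]
    (hG : G.IsRegularOfDegree 3) (M : Fin 4 → G.Subgraph) (hM : IsPMCovering G M) (v : V) :
    ∃ w, G.Adj v w ∧ coverCount M v w = 2 ∧
      ∀ u, G.Adj v u → u ≠ w → coverCount M v u = 1 := by
  classical
  have hpos : ∀ w, G.Adj v w → 1 ≤ coverCount M v w := by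
    intro w hw
    obtain ⟨i, hi⟩ := hM.2 s(v, w) hw
    exact Finset.card_pos.2 ⟨i, by simpa using hi⟩
  have hsum := sum_coverCount G M hM.1 v
  obtain ⟨a, b, c, hab, hac, hbc, hN⟩ :=
    Finset.card_eq_three.1 ((G.card_neighborFinset_eq_degree v).trans (hG v))
  have hadj : ∀ u, G.Adj v u ↔ u = a ∨ u = b ∨ u = c := by
    intro u
    rw [← mem_neighborFinset, hN]
    simp
  rw [hN, Finset.sum_insert (by simp [hab, hac]), Finset.sum_pair hbc] at hsum
  have ha := hpos a ((hadj a).2 (by simp))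
  have hb := hpos b ((hadj b).2 (by simp))
  have hc := hpos c ((hadj c).2 (by simp))
  have h3 : coverCount M v a = 2 ∨ coverCount M v b = 2 ∨ coverCount M v c = 2 := by omega
  rcases h3 with h | h | h
  · refine ⟨a, (hadj a).2 (by simp), h, fun u hu hne => ?_⟩
    rcases (hadj u).1 hu with rfl | rfl | rfl <;> first | exact absurd rfl hne | omega
  · refine ⟨b, (hadj b).2 (by simp), h, fun u hu hne => ?_⟩
    rcases (hadj u).1 hu with rfl | rfl | rfl <;> first | exact absurd rfl hne | omega
  · refine ⟨c, (hadj c).2 (by simp), h, fun u hu hne => ?_⟩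
    rcases (hadj u).1 hu with rfl | rfl | rfl <;> first | exact absurd rfl hne | omega

/-- The spanning subgraph formed by the edges lying in exactly two members of `M`. -/
noncomputable def doubleSubgraph {V : Type*} {G : SimpleGraph V} {k : ℕ}
    (M : Fin k → G.Subgraph) : G.Subgraph where
  verts := Set.univ
  Adj v w := G.Adj v w ∧ coverCount M v w = 2
  adj_sub h := h.1
  edge_vert _ := Set.mem_univ _
  symm := ⟨fun v w h => ⟨h.1.symm, by rw [coverCount_comm]; exact h.2⟩⟩

/-- A bridgeless cubic graph with perfect matching index `4` has an odd covering
of size `5`. -/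
theorem odd_covering_of_tau_four {V : Type*} [Fintype V]
    (G : SimpleGraph V) [DecidableRel G.Adj] (hG : G.IsRegularOfDegree 3)
    (hbridgeless : ∀ e ∈ G.edgeSet, ¬ G.IsBridge e)
    (htau : tau G = 4) :
    ∃ M : Fin 5 → G.Subgraph, IsOddCovering G M := by
  classical
  -- `sInf ∅ = 0 ≠ 4`, so the infimum defining `tau G` is attained.
  have hmem : 4 ∈ {k | ∃ M : Fin k → G.Subgraph, IsPMCovering G M} := by
    rw [← htau]
    refine Nat.sInf_mem (Set.nonempty_iff_ne_empty.2 fun h => ?_)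
    simp [tau, h] at htau
  obtain ⟨M, hM⟩ := hmem
  have hD := exists_double_edge G hG M hM
  refine ⟨Fin.cons (doubleSubgraph M) M, ?_, ?_⟩
  · refine Fin.cases ?_ hM.1
    refine ⟨fun v _ => ?_, fun v => Set.mem_univ v⟩
    obtain ⟨w, hw, h2, h1⟩ := hD v
    refine ⟨w, ⟨hw, h2⟩, fun u hu => ?_⟩
    by_contra hne
    have := h1 u hu.1 hne
    have := hu.2
    omega
  · intro e he
    induction e with | _ v u
    have hvu : G.Adj v u := he
    have hcount : Nat.card {i : Fin 5 // s(v, u) ∈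
        ((Fin.cons (doubleSubgraph M) M : Fin 5 → G.Subgraph) i).edgeSet} =
        (if coverCount M v u = 2 then 1 else 0) + coverCount M v u := by
      rw [Nat.card_eq_fintype_card, Fintype.card_subtype, Finset.card_filter, Fin.sum_univ_succ]
      congr 1
      · simp [doubleSubgraph, hvu]
      · simp [coverCount]
    rw [hcount]
    obtain ⟨w, hw, h2, h1⟩ := hD v
    by_cases huw : u = w
    · subst huw
      rw [h2]
      decide
    · rw [h1 u hvu huw]
      decide
end

section
/- Let G be a bridgeless cubic graph having no odd covering and let H be a connected bipartite cubic graph. Then the 3-cut connection G⊗H has no odd covering. -/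
/-!
The cut edges of `G ⊗ H` leave `H - v` only from the colour class of `H` opposite to `v`.
A regular bipartite graph has colour classes of equal size, so in `H - v` the class opposite to
`v` has exactly one vertex more than the class of `v`. A perfect matching of `G ⊗ H` matches the
smaller class injectively into the larger one, hence it contains exactly one cut edge
(`existsUnique_cut`). Contracting the `H`-side to the vertex `u` therefore turns each perfect
matching of `G ⊗ H` into a perfect matching of `G` (`contractMatching_isPerfectMatching`).
Each edge of `G` corresponds to one edge of `G ⊗ H` and this correspondence preserves
membership, so an odd covering of `G ⊗ H` yields an odd covering of `G`.
-/

open SimpleGraph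

section ThreeCut

variable {V W : Type*} {G : SimpleGraph V} {H : SimpleGraph W} {u : V} {v : W}
  {u₁ u₂ u₃ : V} {v₁ v₂ v₃ : W}

lemma threeCut_adj_inl_inl (a b : {x : V // x ≠ u}) :
    (threeCutConnection G H u v u₁ u₂ u₃ v₁ v₂ v₃).Adj (Sum.inl a) (Sum.inl b) ↔
      G.Adj a.1 b.1 := by
  simp only [threeCutConnection, SimpleGraph.fromRel_adj]
  constructor
  · rintro ⟨_, h | h⟩
    exacts [h, h.symm]
  · intro h
    refine ⟨fun e => ?_, Or.inl h⟩
    cases e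
    exact G.irrefl h

lemma threeCut_adj_inr_inr (a b : {x : W // x ≠ v}) :
    (threeCutConnection G H u v u₁ u₂ u₃ v₁ v₂ v₃).Adj (Sum.inr a) (Sum.inr b) ↔
      H.Adj a.1 b.1 := by
  simp only [threeCutConnection, SimpleGraph.fromRel_adj]
  constructor
  · rintro ⟨_, h | h⟩
    exacts [h, h.symm]
  · intro h
    refine ⟨fun e => ?_, Or.inl h⟩
    cases e
    exact H.irrefl h

lemma threeCut_adj_inl_inr (a : {x : V // x ≠ u}) (b : {x : W // x ≠ v}) :
    (threeCutConnection G H u v u₁ u₂ u₃ v₁ v₂ v₃).Adj (Sum.inl a) (Sum.inr b) ↔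
      (a.1 = u₁ ∧ b.1 = v₁) ∨ (a.1 = u₂ ∧ b.1 = v₂) ∨ (a.1 = u₃ ∧ b.1 = v₃) := by
  simp [threeCutConnection, SimpleGraph.fromRel_adj]

lemma threeCut_cut_adj_left (hNu : G.neighborSet u = {u₁, u₂, u₃})
    {a : {x : V // x ≠ u}} {b : {x : W // x ≠ v}}
    (h : (threeCutConnection G H u v u₁ u₂ u₃ v₁ v₂ v₃).Adj (Sum.inl a) (Sum.inr b)) :
    G.Adj u a.1 := by
  rw [threeCut_adj_inl_inr] at h
  rw [← SimpleGraph.mem_neighborSet, hNu]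
  rcases h with h | h | h <;> simp [h.1]

lemma threeCut_cut_adj_right (hNv : H.neighborSet v = {v₁, v₂, v₃})
    {a : {x : V // x ≠ u}} {b : {x : W // x ≠ v}}
    (h : (threeCutConnection G H u v u₁ u₂ u₃ v₁ v₂ v₃).Adj (Sum.inl a) (Sum.inr b)) :
    H.Adj v b.1 := by
  rw [threeCut_adj_inl_inr] at h
  rw [← SimpleGraph.mem_neighborSet, hNv]
  rcases h with h | h | h <;> simp [h.2]

/-- Double counting edges: the two colour classes of a cubic 2-coloured graph are equinumerous. -/
lemma card_colour_classes [Fintype W] [DecidableRel H.Adj] (hH : H.IsRegularOfDegree 3)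
    (C : H.Coloring (Fin 2)) (v : W) :
    (Finset.univ.filter fun w => C w = C v).card =
      (Finset.univ.filter fun w => C w ≠ C v).card := by
  classical
  have hb : H.IsBipartiteWith
      ((Finset.univ.filter fun w => C w = C v : Finset W) : Set W)
      ((Finset.univ.filter fun w => C w ≠ C v : Finset W) : Set W) := by
    refine ⟨?_, ?_⟩
    · rw [Finset.disjoint_coe]
      exact Finset.disjoint_filter_filter_not _ _ _
    · intro a b hab
      have := C.valid hab
      simp only [Finset.coe_filter, Finset.mem_univ, true_and, Set.mem_ofPred_eq]
      omega
  have h := SimpleGraph.isBipartiteWith_sum_degrees_eq hb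
  simp only [hH.degree_eq, Finset.sum_const, smul_eq_mul] at h
  omega

/-- A perfect matching of `G ⊗ H` contains exactly one edge of the principal cut. -/
lemma existsUnique_cut [Fintype W] [DecidableRel H.Adj] (hH : H.IsRegularOfDegree 3)
    (C : H.Coloring (Fin 2)) (hNv : H.neighborSet v = {v₁, v₂, v₃})
    {M : (threeCutConnection G H u v u₁ u₂ u₃ v₁ v₂ v₃).Subgraph} (hM : M.IsPerfectMatching) :
    ∃! a : {x : V // x ≠ u}, ∃ y, M.Adj (Sum.inl a) (Sum.inr y) := by
  classical
  rw [SimpleGraph.Subgraph.isPerfectMatching_iff] at hM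
  set A : Finset W := Finset.univ.filter fun w => C w = C v with hA
  set B : Finset W := Finset.univ.filter fun w => C w ≠ C v with hB
  have hcard : A.card = B.card := card_colour_classes hH C v
  have hvA : v ∈ A := by simp [hA]
  have hcut : ∀ {a y}, M.Adj (Sum.inl a) (Sum.inr y) → C y.1 ≠ C v := fun h =>
    (C.valid (threeCut_cut_adj_right hNv (M.adj_sub h))).symm
  -- A vertex of `H - v` coloured like `v` is matched inside `H`, to the opposite class.
  have hpart : ∀ w : W, w ∈ A.erase v → ∃ z : W, ∃ hw : w ≠ v, ∃ hz : z ≠ v,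
      z ∈ B ∧ M.Adj (Sum.inr ⟨w, hw⟩) (Sum.inr ⟨z, hz⟩) := by
    intro w hw
    obtain ⟨hwv, hwA⟩ := Finset.mem_erase.1 hw
    have hwC : C w = C v := by simpa [hA] using hwA
    obtain ⟨p, hp, -⟩ := hM (Sum.inr ⟨w, hwv⟩)
    rcases p with a | z
    · exact absurd hwC (hcut hp.symm)
    · have hval := C.valid ((threeCut_adj_inr_inr _ _).1 (M.adj_sub hp))
      refine ⟨z.1, hwv, z.2, ?_, hp⟩
      simp only [hB, Finset.mem_filter, Finset.mem_univ, true_and]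
      rw [← hwC]
      exact hval.symm
  choose! f hf using hpart
  have hfinj : Set.InjOn f (A.erase v : Finset W) := by
    intro w hw w' hw' he
    obtain ⟨h1, h2, -, h⟩ := hf w hw
    obtain ⟨h1', h2', -, h'⟩ := hf w' hw'
    have e : (⟨f w', h2'⟩ : {x : W // x ≠ v}) = ⟨f w, h2⟩ := Subtype.ext he.symm
    rw [e] at h'
    have := (hM (Sum.inr ⟨f w, h2⟩)).unique h.symm h'.symm
    simpa using this
  have himg : (A.erase v).image f ⊆ B := by
    intro z hz
    obtain ⟨w, hw, rfl⟩ := Finset.mem_image.1 hz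
    exact (hf w hw).2.2.1
  have hone : (B \ (A.erase v).image f).card = 1 := by
    have hpos : 0 < A.card := Finset.card_pos.2 ⟨v, hvA⟩
    rw [Finset.card_sdiff_of_subset himg, Finset.card_image_of_injOn hfinj,
      Finset.card_erase_of_mem hvA]
    omega
  -- The `H`-end of a cut edge in `M` lies in the larger class and is missed by `f`.
  have hend : ∀ {a y}, M.Adj (Sum.inl a) (Sum.inr y) → y.1 ∈ B \ (A.erase v).image f := by
    intro a y h
    rw [Finset.mem_sdiff]
    refine ⟨by simpa [hB] using hcut h, fun hy => ?_⟩
    obtain ⟨w, hw, hwy⟩ := Finset.mem_image.1 hy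
    obtain ⟨h1, h2, -, h'⟩ := hf w hw
    have e : (⟨f w, h2⟩ : {x : W // x ≠ v}) = y := Subtype.ext hwy
    rw [e] at h'
    have := (hM (Sum.inr y)).unique h.symm h'.symm
    simp at this
  obtain ⟨y₀, hy₀⟩ := Finset.card_eq_one.1 hone
  have hy₀mem : y₀ ∈ B \ (A.erase v).image f := by simp [hy₀]
  obtain ⟨hyB, hyf⟩ := Finset.mem_sdiff.1 hy₀mem
  have hyC : C y₀ ≠ C v := by simpa [hB] using hyB
  have hyv : y₀ ≠ v := fun e => hyC (by rw [e])
  have huniq : ∀ {a y}, M.Adj (Sum.inl a) (Sum.inr y) → y = ⟨y₀, hyv⟩ := by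
    intro a y h
    have := hend h
    rw [hy₀, Finset.mem_singleton] at this
    exact Subtype.ext this
  obtain ⟨p, hp, hpu⟩ := hM (Sum.inr ⟨y₀, hyv⟩)
  rcases p with a | z
  · refine ⟨a, ⟨_, hp.symm⟩, ?_⟩
    rintro b ⟨y, hb⟩
    have := huniq hb
    subst this
    simpa using hpu _ hb.symm
  · exfalso
    have hval := C.valid ((threeCut_adj_inr_inr _ _).1 (M.adj_sub hp))
    have hzC : C z.1 = C v := by
      change C y₀ ≠ C z.1 at hval
      omega
    have hzA : z.1 ∈ A.erase v := Finset.mem_erase.2 ⟨z.2, by simpa [hA] using hzC⟩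
    obtain ⟨h1, h2, -, h⟩ := hf z.1 hzA
    have := (hM (Sum.inr z)).unique h hp.symm
    apply hyf
    refine Finset.mem_image.2 ⟨z.1, hzA, ?_⟩
    simpa using this

/-- The image in `G` of a subgraph `M` of `G ⊗ H` when the `H`-side is contracted to `u`:
edges inside `G - u` are kept and a cut edge at `a` becomes the edge `ua`. -/
def contractMatching (hNu : G.neighborSet u = {u₁, u₂, u₃})
    (M : (threeCutConnection G H u v u₁ u₂ u₃ v₁ v₂ v₃).Subgraph) : G.Subgraph where
  verts := Set.univ
  Adj a b := (∃ (ha : a ≠ u) (hb : b ≠ u), M.Adj (Sum.inl ⟨a, ha⟩) (Sum.inl ⟨b, hb⟩)) ∨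
    (a = u ∧ ∃ (hb : b ≠ u) (y : _), M.Adj (Sum.inl ⟨b, hb⟩) (Sum.inr y)) ∨
    (b = u ∧ ∃ (ha : a ≠ u) (y : _), M.Adj (Sum.inl ⟨a, ha⟩) (Sum.inr y))
  adj_sub := by
    rintro a b (⟨ha, hb, h⟩ | ⟨rfl, hb, y, h⟩ | ⟨rfl, ha, y, h⟩)
    · exact (threeCut_adj_inl_inl _ _).1 (M.adj_sub h)
    · exact threeCut_cut_adj_left hNu (M.adj_sub h)
    · exact (threeCut_cut_adj_left hNu (M.adj_sub h)).symm
  edge_vert _ := Set.mem_univ _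
  symm := ⟨by
    rintro a b (⟨ha, hb, h⟩ | h | h)
    · exact Or.inl ⟨hb, ha, h.symm⟩
    · exact Or.inr (Or.inr h)
    · exact Or.inr (Or.inl h)⟩

lemma contractMatching_adj_of_ne (hNu : G.neighborSet u = {u₁, u₂, u₃})
    (M : (threeCutConnection G H u v u₁ u₂ u₃ v₁ v₂ v₃).Subgraph) {a b : V}
    (ha : a ≠ u) (hb : b ≠ u) :
    (contractMatching hNu M).Adj a b ↔ M.Adj (Sum.inl ⟨a, ha⟩) (Sum.inl ⟨b, hb⟩) := by
  simp [contractMatching, ha, hb]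

lemma contractMatching_adj_u (hNu : G.neighborSet u = {u₁, u₂, u₃})
    (M : (threeCutConnection G H u v u₁ u₂ u₃ v₁ v₂ v₃).Subgraph) {b : V} (hb : b ≠ u) :
    (contractMatching hNu M).Adj u b ↔ ∃ y, M.Adj (Sum.inl ⟨b, hb⟩) (Sum.inr y) := by
  simp [contractMatching, hb]

lemma contractMatching_isPerfectMatching [Fintype W] [DecidableRel H.Adj]
    (hH : H.IsRegularOfDegree 3) (C : H.Coloring (Fin 2))
    (hNu : G.neighborSet u = {u₁, u₂, u₃}) (hNv : H.neighborSet v = {v₁, v₂, v₃})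
    {M : (threeCutConnection G H u v u₁ u₂ u₃ v₁ v₂ v₃).Subgraph} (hM : M.IsPerfectMatching) :
    (contractMatching hNu M).IsPerfectMatching := by
  have hcut := existsUnique_cut hH C hNv hM
  rw [SimpleGraph.Subgraph.isPerfectMatching_iff] at hM ⊢
  intro a
  by_cases ha : a = u
  · subst ha
    obtain ⟨b, hb, hbu⟩ := hcut
    refine ⟨b.1, (contractMatching_adj_u hNu M b.2).2 hb, fun c hc => ?_⟩
    have hca : c ≠ a := ((contractMatching hNu M).adj_sub hc).ne'
    exact congrArg Subtype.val (hbu ⟨c, hca⟩ ((contractMatching_adj_u hNu M hca).1 hc))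
  · obtain ⟨p, hp, hpu⟩ := hM (Sum.inl ⟨a, ha⟩)
    rcases p with b | y
    · refine ⟨b.1, (contractMatching_adj_of_ne hNu M ha b.2).2 hp, fun c hc => ?_⟩
      by_cases hcu : c = u
      · subst hcu
        obtain ⟨y, hy⟩ := (contractMatching_adj_u hNu M ha).1 hc.symm
        simpa using hpu _ hy
      · simpa [Subtype.ext_iff] using hpu _ ((contractMatching_adj_of_ne hNu M ha hcu).1 hc)
    · refine ⟨u, ((contractMatching_adj_u hNu M ha).2 ⟨y, hp⟩).symm, fun c hc => ?_⟩
      by_contra hcu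
      simpa using hpu _ ((contractMatching_adj_of_ne hNu M ha hcu).1 hc)

/-- Every edge at `u` corresponds to a single cut edge, because `u₁, u₂, u₃` are distinct. -/
lemma exists_cut_edge [Fintype V] [DecidableRel G.Adj] (hG : G.IsRegularOfDegree 3)
    (hNu : G.neighborSet u = {u₁, u₂, u₃}) (hNv : H.neighborSet v = {v₁, v₂, v₃})
    {b : V} (hb : b ≠ u) (hub : G.Adj u b) :
    ∃ y, (threeCutConnection G H u v u₁ u₂ u₃ v₁ v₂ v₃).Adj (Sum.inl ⟨b, hb⟩) (Sum.inr y) ∧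
      ∀ z, (threeCutConnection G H u v u₁ u₂ u₃ v₁ v₂ v₃).Adj (Sum.inl ⟨b, hb⟩) (Sum.inr z) →
        z = y := by
  classical
  have hc : ({u₁, u₂, u₃} : Finset V).card = 3 := by
    rw [← hG.degree_eq u, ← SimpleGraph.card_neighborFinset_eq_degree]
    congr 1
    ext x
    rw [SimpleGraph.mem_neighborFinset, ← SimpleGraph.mem_neighborSet, hNu]
    simp
  have h12 : u₁ ≠ u₂ := by
    rintro rfl
    have := Finset.card_le_two (a := u₁) (b := u₃)
    simp at hc
    omega
  have h13 : u₁ ≠ u₃ := by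
    rintro rfl
    have := Finset.card_le_two (a := u₂) (b := u₁)
    simp at hc
    omega
  have h23 : u₂ ≠ u₃ := by
    rintro rfl
    have := Finset.card_le_two (a := u₁) (b := u₂)
    simp at hc
    omega
  have hv : ∀ x, x ∈ ({v₁, v₂, v₃} : Set W) → x ≠ v := by
    intro x hx
    rw [← hNv] at hx
    exact hx.ne'
  have hb' : b ∈ G.neighborSet u := hub
  simp only [hNu, Set.mem_insert_iff, Set.mem_singleton_iff] at hb'
  simp only [threeCut_adj_inl_inr, Subtype.ext_iff]
  rcases hb' with rfl | rfl | rfl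
  · exact ⟨⟨v₁, hv _ (by simp)⟩, by simp, by simp [h12, h13]⟩
  · exact ⟨⟨v₂, hv _ (by simp)⟩, by simp, by simp [h12.symm, h23]⟩
  · exact ⟨⟨v₃, hv _ (by simp)⟩, by simp, by simp [h13.symm, h23.symm]⟩

/-- Each edge of `G` has a counterpart in `G ⊗ H` lying in exactly the same matchings. -/
lemma exists_corresponding_edge [Fintype V] [DecidableRel G.Adj] (hG : G.IsRegularOfDegree 3)
    (hNu : G.neighborSet u = {u₁, u₂, u₃}) (hNv : H.neighborSet v = {v₁, v₂, v₃})
    {a b : V} (hab : G.Adj a b) :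
    ∃ e ∈ (threeCutConnection G H u v u₁ u₂ u₃ v₁ v₂ v₃).edgeSet,
      ∀ M : (threeCutConnection G H u v u₁ u₂ u₃ v₁ v₂ v₃).Subgraph,
        (contractMatching hNu M).Adj a b ↔ e ∈ M.edgeSet := by
  have key : ∀ {b : V}, G.Adj u b →
      ∃ e ∈ (threeCutConnection G H u v u₁ u₂ u₃ v₁ v₂ v₃).edgeSet,
        ∀ M : (threeCutConnection G H u v u₁ u₂ u₃ v₁ v₂ v₃).Subgraph,
          (contractMatching hNu M).Adj u b ↔ e ∈ M.edgeSet := by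
    intro b hub
    have hb : b ≠ u := hub.ne'
    obtain ⟨y, hy, hyu⟩ := exists_cut_edge hG hNu hNv hb hub
    refine ⟨s(Sum.inl ⟨b, hb⟩, Sum.inr y), hy, fun M => ?_⟩
    rw [contractMatching_adj_u hNu M hb, SimpleGraph.Subgraph.mem_edgeSet]
    constructor
    · rintro ⟨z, hz⟩
      rwa [← hyu z (M.adj_sub hz)]
    · exact fun h => ⟨y, h⟩
  by_cases ha : a = u
  · subst ha
    exact key hab
  · by_cases hb : b = u
    · subst hb
      obtain ⟨e, he, h⟩ := key hab.symm
      exact ⟨e, he, fun M => by rw [SimpleGraph.Subgraph.adj_comm, h M]⟩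
    · refine ⟨s(Sum.inl ⟨a, ha⟩, Sum.inl ⟨b, hb⟩), ?_, fun M => ?_⟩
      · rw [SimpleGraph.mem_edgeSet]
        exact (threeCut_adj_inl_inl _ _).2 hab
      rw [contractMatching_adj_of_ne hNu M ha hb, SimpleGraph.Subgraph.mem_edgeSet]

end ThreeCut

/-- If `G` is a bridgeless cubic graph without an odd covering and `H` is a connected
bipartite cubic graph, then `G ⊗ H` has no odd covering. -/
theorem threeCutConnection_no_odd_covering {V W : Type*} [Fintype V] [Fintype W]
    (G : SimpleGraph V) (H : SimpleGraph W)
    [DecidableRel G.Adj] [DecidableRel H.Adj]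
    (hG : G.IsRegularOfDegree 3)
    (hbridgeless : ∀ e ∈ G.edgeSet, ¬ G.IsBridge e)
    (hnoodd : ¬ ∃ (k : ℕ) (M : Fin k → G.Subgraph), IsOddCovering G M)
    (hH : H.IsRegularOfDegree 3) (hHconn : H.Connected) (hHbip : H.Colorable 2)
    (u : V) (v : W) (u₁ u₂ u₃ : V) (v₁ v₂ v₃ : W)
    (hNu : G.neighborSet u = {u₁, u₂, u₃}) (hNv : H.neighborSet v = {v₁, v₂, v₃}) :
    ¬ ∃ (k : ℕ) (M : Fin k → (threeCutConnection G H u v u₁ u₂ u₃ v₁ v₂ v₃).Subgraph),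
        IsOddCovering (threeCutConnection G H u v u₁ u₂ u₃ v₁ v₂ v₃) M := by
  rintro ⟨k, M, hM, hodd⟩
  obtain ⟨C⟩ := hHbip
  refine hnoodd ⟨k, fun i => contractMatching hNu (M i),
    fun i => contractMatching_isPerfectMatching hH C hNu hNv (hM i), fun e he => ?_⟩
  induction e using Sym2.ind with
  | _ a b =>
    obtain ⟨e', he', h⟩ := exists_corresponding_edge hG hNu hNv he
    have := hodd e' he'
    simpa only [SimpleGraph.Subgraph.mem_edgeSet, h] using this
end
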